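/- arXiv:2208.10579 — 2 statements merged into one kernel-verified Lean document; each statement's English description precedes it below -/
import Mathlib

section
/- If f, g : M → N are smooth maps between smooth manifolds that are homotopic (through a continuous homotopy), then they are smoothly homotopic; if the homotopy is relative to a closed subset A ⊂ M, a smooth homotopy relative to A exists. -/
/- Framework: embedded submanifolds of Euclidean space (Guillemin–Pollack style),
tangent spaces via velocity vectors of curves, local-straightening charts. -/

noncomputable section
open Set Function
open scoped RealInnerProductSpace

abbrev Euc (n : ℕ) : Type := EuclideanSpace ℝ (Fin n)

/-- Velocity vectors at `x` of smooth curves through `x` contained in `S`. -/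
def tangentSet {E : Type*} [NormedAddCommGroup E] [NormedSpace ℝ E] (S : Set E) (x : E) : Set E :=
  {v | ∃ γ : ℝ → E, (∀ t, γ t ∈ S) ∧ γ 0 = x ∧ HasDerivAt γ v 0}

/-- The tangent space of a subset `S` at `x`, as a linear subspace of the ambient space. -/
def tangentSpaceOf {E : Type*} [NormedAddCommGroup E] [NormedSpace ℝ E] (S : Set E) (x : E) :
    Submodule ℝ E := Submodule.span ℝ (tangentSet S x)

/-- `S` is a smooth embedded `k`-dimensional submanifold (without boundary):
around every point there is a smooth local straightening diffeomorphism carrying `S`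
onto a `k`-dimensional linear subspace. -/
def IsSubmanifoldOfDim {E : Type*} [NormedAddCommGroup E] [NormedSpace ℝ E]
    (k : ℕ) (S : Set E) : Prop :=
  ∀ x ∈ S, ∃ (U V : Set E) (φ ψ : E → E) (K : Submodule ℝ E),
    Module.finrank ℝ K = k ∧ IsOpen U ∧ IsOpen V ∧ x ∈ U ∧
    ContDiffOn ℝ (⊤ : ℕ∞) φ U ∧ ContDiffOn ℝ (⊤ : ℕ∞) ψ V ∧
    MapsTo φ U V ∧ MapsTo ψ V U ∧
    (∀ y ∈ U, ψ (φ y) = y) ∧ (∀ z ∈ V, φ (ψ z) = z) ∧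
    S ∩ U = U ∩ φ ⁻¹' (K : Set E)

section aux
set_option linter.unusedSectionVars false
open Topology

variable {E : Type*} [NormedAddCommGroup E] [InnerProductSpace ℝ E] [FiniteDimensional ℝ E]

def IsLocRetr (N : Set E) (O : Set E) (ρ : E → E) : Prop :=
  IsOpen O ∧ ContDiffOn ℝ (⊤ : ℕ∞) ρ O ∧ MapsTo ρ O N ∧ ∀ y ∈ N ∩ O, ρ y = y

def IsNearestPt (N : Set E) (z y : E) : Prop := y ∈ N ∧ ∀ y' ∈ N, dist z y ≤ dist z y'

def critF (ρ : E → E) (q : E × E) : E :=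
  q.2 - ρ q.2 + (ContinuousLinearMap.adjoint (fderiv ℝ ρ q.2)) (q.1 - q.2)

def critPhi (ρ : E → E) (q : E × E) : E × E := (q.1, critF ρ q)

lemma critPhi_contDiffAt {O : Set E} {ρ : E → E} (hO : IsOpen O)
    (hρ : ContDiffOn ℝ (⊤ : ℕ∞) ρ O) {q : E × E} (hq : q.2 ∈ O) :
    ContDiffAt ℝ (⊤ : ℕ∞) (critPhi ρ) q := by
  have h1 : ContDiffAt ℝ (⊤ : ℕ∞) (fun q : E × E => ρ q.2) q :=
    ContDiffAt.comp q (hρ.contDiffAt (hO.mem_nhds hq)) contDiffAt_snd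
  have h2 : ContDiffAt ℝ (⊤ : ℕ∞) (fun q : E × E => fderiv ℝ ρ q.2) q :=
    ContDiffAt.comp q (g := fderiv ℝ ρ)
      ((hρ.fderiv_of_isOpen hO (m := (⊤ : ℕ∞)) (by simp)).contDiffAt (hO.mem_nhds hq)) contDiffAt_snd
  have h3 : ContDiffAt ℝ (⊤ : ℕ∞)
      (fun q : E × E => (ContinuousLinearMap.adjoint (fderiv ℝ ρ q.2) : E →L[ℝ] E)) q :=
    ContDiffAt.comp q (g := fun A : E →L[ℝ] E => (ContinuousLinearMap.adjoint A : E →L[ℝ] E))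
      ((ContinuousLinearMap.adjoint (𝕜 := ℝ) (E := E) (F := E)).toContinuousLinearEquiv.contDiff.contDiffAt) h2
  exact contDiffAt_fst.prodMk ((contDiffAt_snd.sub h1).add (h3.clm_apply (contDiffAt_fst.sub contDiffAt_snd)))

lemma locRetr_idem {N O : Set E} {ρ : E → E} (h : IsLocRetr N O ρ) {p : E} (hp : p ∈ N)
    (hpO : p ∈ O) (v : E) : fderiv ℝ ρ p (fderiv ℝ ρ p v) = fderiv ℝ ρ p v := by
  obtain ⟨hO, hρ, hm, hid⟩ := h
  have hd : HasFDerivAt ρ (fderiv ℝ ρ p) p :=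
    ((hρ.contDiffAt (hO.mem_nhds hpO)).differentiableAt (by simp)).hasFDerivAt
  have hpp : ρ p = p := hid p ⟨hp, hpO⟩
  have hc : HasFDerivAt (ρ ∘ ρ) ((fderiv ℝ ρ p).comp (fderiv ℝ ρ p)) p :=
    HasFDerivAt.comp p (by rw [hpp]; exact hd) hd
  have he : ρ ∘ ρ =ᶠ[𝓝 p] ρ := by
    have : ∀ᶠ w in 𝓝 p, ρ w ∈ O := hd.continuousAt.eventually_mem (by rw [hpp]; exact hO.mem_nhds hpO)
    filter_upwards [this, hO.mem_nhds hpO] with w h1 h2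
    exact hid _ ⟨hm h2, h1⟩
  have := (hc.congr_of_eventuallyEq he.symm).unique hd
  exact DFunLike.congr_fun this v

lemma critPhi_equiv {N O : Set E} {ρ : E → E} (h : IsLocRetr N O ρ) {p : E} (hp : p ∈ N)
    (hpO : p ∈ O) : ∃ e : (E × E) ≃L[ℝ] (E × E),
      HasFDerivAt (critPhi ρ) (e : (E × E) →L[ℝ] (E × E)) (p, p) := by
  have hO := h.1
  have hρ := h.2.1
  have hQ := locRetr_idem h hp hpO
  set Q := fderiv ℝ ρ p with hQdef
  have hd : HasFDerivAt ρ Q p :=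
    ((hρ.contDiffAt (hO.mem_nhds hpO)).differentiableAt (by simp)).hasFDerivAt
  have h2 : DifferentiableAt ℝ (fun q : E × E => fderiv ℝ ρ q.2) (p, p) :=
    (ContDiffAt.comp (p, p) (g := fderiv ℝ ρ) (f := Prod.snd)
      ((hρ.fderiv_of_isOpen hO (m := (⊤ : ℕ∞)) (by simp)).contDiffAt (hO.mem_nhds hpO)) contDiffAt_snd).differentiableAt (by simp)
  have h3 : DifferentiableAt ℝ
      (fun q : E × E => (ContinuousLinearMap.adjoint (fderiv ℝ ρ q.2) : E →L[ℝ] E)) (p, p) :=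
    DifferentiableAt.comp (p, p) (g := fun A : E →L[ℝ] E => (ContinuousLinearMap.adjoint A : E →L[ℝ] E))
      ((ContinuousLinearMap.adjoint (𝕜 := ℝ) (E := E) (F := E)).toContinuousLinearEquiv.differentiableAt) h2
  have h4 := h3.hasFDerivAt.clm_apply ((hasFDerivAt_fst (𝕜 := ℝ) (p := (p, p))).sub (hasFDerivAt_snd (𝕜 := ℝ)))
  have h5 : HasFDerivAt (fun q : E × E => ρ q.2) (Q.comp (ContinuousLinearMap.snd ℝ E E)) (p, p) :=
    HasFDerivAt.comp (p, p) (g := ρ) (f := Prod.snd) hd hasFDerivAt_snd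
  have h6 := (hasFDerivAt_fst (𝕜 := ℝ) (p := (p, p))).prodMk (((hasFDerivAt_snd (𝕜 := ℝ) (p := (p, p))).sub h5).add h4)
  obtain ⟨T, h8, key⟩ : ∃ T : (E × E) →L[ℝ] (E × E), HasFDerivAt (critPhi ρ) T (p, p) ∧
      ∀ v : E × E, T v = (v.1, v.2 - Q v.2 + ContinuousLinearMap.adjoint Q (v.1 - v.2)) := by
    refine ⟨_, h6, ?_⟩
    intro v
    simp [← hQdef]
  have inj : Injective T := by
    rw [injective_iff_map_eq_zero]
    rintro ⟨h, k⟩ hk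
    rw [key] at hk
    simp only [Prod.mk_eq_zero] at hk
    obtain ⟨rfl, hk⟩ := hk
    have e1 : k = Q k + ContinuousLinearMap.adjoint Q k := by
      simp only [zero_sub, map_neg] at hk
      rw [← sub_eq_zero, ← hk]; abel
    have e2 : Q (ContinuousLinearMap.adjoint Q k) = 0 := by
      have := congrArg Q e1
      rw [map_add, hQ] at this
      simpa using this
    have e3 : ContinuousLinearMap.adjoint Q k = 0 := by
      rw [← inner_self_eq_zero (𝕜 := ℝ), ContinuousLinearMap.adjoint_inner_left, e2, inner_zero_right]
    have e4 : k = Q k := by rw [e3, add_zero] at e1; exact e1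
    have : k = 0 := by
      rw [← inner_self_eq_zero (𝕜 := ℝ)]
      nth_rewrite 2 [e4]
      rw [← ContinuousLinearMap.adjoint_inner_left, e3, inner_zero_left]
    simp [this]
  refine ⟨(LinearEquiv.ofInjectiveEndo (T : (E × E) →ₗ[ℝ] (E × E)) inj).toContinuousLinearEquiv, ?_⟩
  convert h8 using 1
  ext v <;> rfl

lemma crit_of_nearest {N O : Set E} {ρ : E → E} (h : IsLocRetr N O ρ) {z y : E}
    (hy : IsNearestPt N z y) (hyO : y ∈ O) : critF ρ (z, y) = 0 := by
  obtain ⟨hO, hρ, hm, hid⟩ := h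
  have hyy : ρ y = y := hid y ⟨hy.1, hyO⟩
  have hd : HasFDerivAt ρ (fderiv ℝ ρ y) y :=
    ((hρ.contDiffAt (hO.mem_nhds hyO)).differentiableAt (by simp)).hasFDerivAt
  have hmin : IsLocalMin (fun w => ‖z - ρ w‖ ^ 2) y := by
    filter_upwards [hO.mem_nhds hyO] with w hw
    have := hy.2 _ (hm hw)
    rw [dist_eq_norm, dist_eq_norm] at this
    rw [hyy]
    gcongr
  have hd2 := (hd.const_sub z).norm_sq
  have h0 := hmin.hasFDerivAt_eq_zero hd2
  have h1 : ContinuousLinearMap.adjoint (fderiv ℝ ρ y) (z - y) = 0 := by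
    rw [← inner_self_eq_zero (𝕜 := ℝ), ContinuousLinearMap.adjoint_inner_left]
    have := DFunLike.congr_fun h0 (ContinuousLinearMap.adjoint (fderiv ℝ ρ y) (z - y))
    generalize ContinuousLinearMap.adjoint (fderiv ℝ ρ y) (z - y) = w at this ⊢
    simp [hyy, inner_sub_left] at this
    rw [inner_sub_left]
    linarith
  simp [critF, hyy, h1]

lemma exists_nearest {N O : Set E} {ρ : E → E} (h : IsLocRetr N O ρ) {p : E} (hp : p ∈ N)
    (hpO : p ∈ O) : ∀ᶠ z in 𝓝 p, ∃ y, IsNearestPt N z y := by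
  obtain ⟨hO, hρ, hm, hid⟩ := h
  obtain ⟨ε, hε, hball⟩ := Metric.nhds_basis_closedBall.mem_iff.1 (hO.mem_nhds hpO)
  have hcomp : IsCompact (N ∩ Metric.closedBall p ε) := by
    have heq : N ∩ Metric.closedBall p ε = {y ∈ Metric.closedBall p ε | ρ y - y ∈ ({0} : Set E)} := by
      ext y
      constructor
      · rintro ⟨h1, h2⟩
        exact ⟨h2, by simp [hid y ⟨h1, hball h2⟩]⟩
      · rintro ⟨h1, h2⟩
        have : ρ y = y := by simpa [sub_eq_zero] using h2
        exact ⟨this ▸ hm (hball h1), h1⟩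
    rw [heq]
    refine (isCompact_closedBall p ε).of_isClosed_subset ?_ (fun y hy => hy.1)
    exact ((hρ.continuousOn.mono hball).sub continuousOn_id).preimage_isClosed_of_isClosed
      Metric.isClosed_closedBall isClosed_singleton
  filter_upwards [Metric.ball_mem_nhds p (half_pos hε)] with z hz
  obtain ⟨y, hy, hmin⟩ := hcomp.exists_isMinOn ⟨p, hp, Metric.mem_closedBall_self hε.le⟩
    (f := fun y => dist z y) (by fun_prop)
  refine ⟨y, hy.1, fun y' hy' => ?_⟩
  by_cases hc : y' ∈ Metric.closedBall p ε
  · exact hmin ⟨hy', hc⟩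
  · have h1 : dist z y ≤ dist z p := hmin ⟨hp, Metric.mem_closedBall_self hε.le⟩
    rw [Metric.mem_closedBall, not_le] at hc
    rw [Metric.mem_ball] at hz
    have := dist_triangle y' z p
    rw [dist_comm y' z] at this
    linarith

lemma local_nearest {N O : Set E} {ρ : E → E} (h : IsLocRetr N O ρ) {p : E} (hp : p ∈ N)
    (hpO : p ∈ O) : ∃ (O' : Set E) (u : E → E), IsOpen O' ∧ p ∈ O' ∧
      ContDiffOn ℝ (⊤ : ℕ∞) u O' ∧ (∀ z ∈ O', ∃ y, IsNearestPt N z y) ∧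
      (∀ z ∈ O', ∀ y, IsNearestPt N z y → y = u z) := by
  obtain ⟨e, he⟩ := critPhi_equiv h hp hpO
  have hpp : ρ p = p := h.2.2.2 p ⟨hp, hpO⟩
  have hcd := critPhi_contDiffAt h.1 h.2.1 (q := (p, p)) hpO
  set Ψ := hcd.toOpenPartialHomeomorph (critPhi ρ) he (by simp) with hΨ
  have hΨc : ∀ q, Ψ q = critPhi ρ q := fun q => rfl
  have hs : (p, p) ∈ Ψ.source := hcd.mem_toOpenPartialHomeomorph_source he (by simp)
  have hval : critPhi ρ (p, p) = (p, 0) := by simp [critPhi, critF, hpp]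
  have ht : (p, (0 : E)) ∈ Ψ.target := by
    have := hcd.image_mem_toOpenPartialHomeomorph_target he (by simp)
    rwa [hval] at this
  have hsymm : Ψ.symm (p, (0 : E)) = (p, p) := by
    rw [← hval, ← hΨc, Ψ.left_inv hs]
  -- good points
  have hgood : ∀ᶠ q in 𝓝 ((p, p) : E × E), q.2 ∈ O ∧
      ∃ e' : (E × E) ≃L[ℝ] (E × E), HasFDerivAt (critPhi ρ) (e' : (E × E) →L[ℝ] (E × E)) q := by
    have h1 : ∀ᶠ q in 𝓝 ((p, p) : E × E), q.2 ∈ O :=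
      continuousAt_snd.eventually_mem (h.1.mem_nhds hpO)
    have h2 : ContinuousAt (fderiv ℝ (critPhi ρ)) (p, p) :=
      (hcd.fderiv_right (m := 0) (by simp)).continuousAt
    have h3 : ∀ᶠ q in 𝓝 ((p, p) : E × E), fderiv ℝ (critPhi ρ) q ∈
        range ((↑) : ((E × E) ≃L[ℝ] (E × E)) → (E × E) →L[ℝ] (E × E)) :=
      h2.eventually_mem (by rw [he.fderiv]; exact e.nhds)
    filter_upwards [h1, h3] with q hq1 hq2
    obtain ⟨e', he'⟩ := hq2
    refine ⟨hq1, e', ?_⟩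
    rw [he']
    exact ((critPhi_contDiffAt h.1 h.2.1 hq1).differentiableAt (by simp)).hasFDerivAt
  have hι : Continuous (fun z : E => (z, (0 : E))) := by fun_prop
  have hev1 : ∀ᶠ z in 𝓝 p, (z, (0 : E)) ∈ Ψ.target :=
    hι.continuousAt.eventually_mem (Ψ.open_target.mem_nhds ht)
  have hev2 : ∀ᶠ z in 𝓝 p, (Ψ.symm (z, (0 : E))).2 ∈ O ∧ ∃ e' : (E × E) ≃L[ℝ] (E × E),
      HasFDerivAt (critPhi ρ) (e' : (E × E) →L[ℝ] (E × E)) (Ψ.symm (z, (0 : E))) := by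
    have : Filter.Tendsto (fun z : E => Ψ.symm (z, (0 : E))) (𝓝 p) (𝓝 (p, p)) := by
      have h1 := (Ψ.continuousAt_symm ht)
      have h2 : ContinuousAt (fun z : E => Ψ.symm (z, (0 : E))) p :=
        ContinuousAt.comp (f := fun z : E => (z, (0 : E))) h1 hι.continuousAt
      have := h2.tendsto
      rwa [hsymm] at this
    exact this.eventually hgood
  obtain ⟨ε, hε, hball⟩ := Metric.mem_nhds_iff.1
    (Filter.inter_mem (Ψ.open_source.mem_nhds hs) 
      (show {q : E × E | q.2 ∈ O} ∈ 𝓝 (p, p) from hgood.mono fun q hq => hq.1))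
  have hev3 : ∀ᶠ z in 𝓝 p, dist z p < ε / 2 := Metric.ball_mem_nhds p (half_pos hε)
  have hev := (hev1.and hev2).and (hev3.and (exists_nearest h hp hpO))
  obtain ⟨O', hO', hO'o, hpO'⟩ := eventually_nhds_iff.1 hev
  refine ⟨O', fun z => (Ψ.symm (z, (0 : E))).2, hO'o, hpO', ?_, fun z hz => (hO' z hz).2.2, ?_⟩
  · intro z hz
    obtain ⟨⟨ht', hq, e', he'⟩, -⟩ := hO' z hz
    have h1 : ContDiffAt ℝ (⊤ : ℕ∞) Ψ.symm (z, (0 : E)) :=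
      Ψ.contDiffAt_symm ht' he' (critPhi_contDiffAt h.1 h.2.1 hq)
    have h2 : ContDiffAt ℝ (⊤ : ℕ∞) (fun z : E => Ψ.symm (z, (0 : E))) z :=
      ContDiffAt.comp z (f := fun z : E => (z, (0 : E))) h1 (contDiffAt_id.prodMk contDiffAt_const)
    exact h2.snd.contDiffWithinAt
  · intro z hz y hy
    have hzp := (hO' z hz).2.1
    have h1 := hy.2 p hp
    have h2 : dist y p < ε := by
      have := dist_triangle y z p
      rw [dist_comm y z] at this
      linarith
    have h3 := hball (show (z, y) ∈ Metric.ball (p, p) ε from by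
      rw [Metric.mem_ball, Prod.dist_eq]; exact max_lt (by simpa using by linarith) h2)
    have h4 := crit_of_nearest h hy h3.2
    have h5 : Ψ (z, y) = (z, 0) := by rw [hΨc]; simp [critPhi, h4]
    show y = (Ψ.symm (z, (0 : E))).2
    rw [← h5, Ψ.left_inv h3.1]

lemma exists_retraction {N : Set E} (hN : ∀ p ∈ N, ∃ O ρ, p ∈ O ∧ IsLocRetr N O ρ) :
    ∃ Ω r, N ⊆ Ω ∧ IsLocRetr N Ω r := by
  have hl : ∀ p : N, ∃ (O' : Set E) (u : E → E), IsOpen O' ∧ (p : E) ∈ O' ∧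
      ContDiffOn ℝ (⊤ : ℕ∞) u O' ∧ (∀ z ∈ O', ∃ y, IsNearestPt N z y) ∧
      (∀ z ∈ O', ∀ y, IsNearestPt N z y → y = u z) := by
    rintro ⟨p, hp⟩
    obtain ⟨O, ρ, hpO, h⟩ := hN p hp
    exact local_nearest h hp hpO
  choose O' u hO hpO hu hex huniq using hl
  have hr : ∀ p : N, ∀ z ∈ O' p, IsNearestPt N z (Classical.epsilon (IsNearestPt N z)) :=
    fun p z hz => Classical.epsilon_spec (hex p z hz)
  refine ⟨⋃ p, O' p, fun z => Classical.epsilon (IsNearestPt N z), ?_, isOpen_iUnion hO, ?_, ?_, ?_⟩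
  · intro p hp
    exact mem_iUnion.2 ⟨⟨p, hp⟩, hpO ⟨p, hp⟩⟩
  · intro z hz
    obtain ⟨p, hp⟩ := mem_iUnion.1 hz
    have h1 : ContDiffAt ℝ (⊤ : ℕ∞) (u p) z := (hu p).contDiffAt ((hO p).mem_nhds hp)
    refine (h1.congr_of_eventuallyEq ?_).contDiffWithinAt
    filter_upwards [(hO p).mem_nhds hp] with w hw
    exact huniq p w hw _ (hr p w hw)
  · intro z hz
    obtain ⟨p, hp⟩ := mem_iUnion.1 hz
    exact (hr p z hp).1
  · rintro y ⟨hy, -⟩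
    have := (hr ⟨y, hy⟩ y (hpO ⟨y, hy⟩)).2 y hy
    rw [dist_self] at this
    exact (dist_le_zero.1 this).symm

lemma exists_delta {Ω : Set E} (hΩ : IsOpen Ω) :
    ∃ δ : E → ℝ, Continuous δ ∧ ∀ y ∈ Ω, 0 < δ y ∧ Metric.ball y (δ y) ⊆ Ω := by
  by_cases hne : Ωᶜ.Nonempty
  · refine ⟨fun y => Metric.infDist y Ωᶜ, Metric.continuous_infDist_pt _, fun y hy => ⟨?_, ?_⟩⟩
    · exact (hΩ.isClosed_compl.notMem_iff_infDist_pos hne).1 (by simpa using hy)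
    · simpa using Metric.ball_infDist_compl_subset (s := Ω) (x := y)
  · rw [not_nonempty_iff_eq_empty, compl_empty_iff] at hne
    exact ⟨fun _ => 1, continuous_const, fun y _ => ⟨one_pos, by simp [hne]⟩⟩

open scoped Manifold ContDiff in
lemma exists_smooth_section {F G : Type*} [NormedAddCommGroup F] [NormedSpace ℝ F]
    [FiniteDimensional ℝ F] [NormedAddCommGroup G] [NormedSpace ℝ G]
    {X : Set F} (hX : IsOpen X) (t : F → Set G) (ht : ∀ x ∈ X, Convex ℝ (t x))
    (hloc : ∀ x ∈ X, ∃ c : F → G, ∃ U ∈ 𝓝 x, ContDiffOn ℝ (⊤ : ℕ∞) c U ∧ ∀ y ∈ U ∩ X, c y ∈ t y) :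
    ∃ k : F → G, ContDiffOn ℝ (⊤ : ℕ∞) k X ∧ ∀ x ∈ X, k x ∈ t x := by
  let X' : TopologicalSpace.Opens F := ⟨X, hX⟩
  have : LocallyCompactSpace X' := hX.locallyCompactSpace
  have : SecondCountableTopology F := inferInstance
  have : SigmaCompactSpace X' := inferInstance
  obtain ⟨g, hg⟩ := exists_contMDiffMap_forall_mem_convex_of_local (n := ⊤) (M := X') 𝓘(ℝ, F)
    (t := fun x => t x) (fun x => ht x x.2) (by
      rintro ⟨x, hx⟩
      obtain ⟨c, U, hU, hc, hct⟩ := hloc x hx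
      refine ⟨Subtype.val ⁻¹' interior U,
        continuous_subtype_val.continuousAt.preimage_mem_nhds (interior_mem_nhds.2 hU),
        fun y => c y, ?_, ?_⟩
      · intro y hy
        refine ContMDiffAt.contMDiffWithinAt ?_
        rw [contMDiffAt_subtype_iff, contMDiffAt_iff_contDiffAt]
        exact hc.contDiffAt (mem_interior_iff_mem_nhds.1 hy)
      · intro y hy
        exact hct y ⟨interior_subset hy, y.2⟩)
  classical
  refine ⟨fun x => if h : x ∈ X then g ⟨x, h⟩ else 0, ?_, ?_⟩
  · intro x hx
    refine ContDiffAt.contDiffWithinAt ?_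
    rw [← contMDiffAt_iff_contDiffAt]
    have := contMDiffAt_subtype_iff (I := 𝓘(ℝ, F)) (I' := 𝓘(ℝ, G)) (n := ∞) (U := X') (x := ⟨x, hx⟩)
      (f := fun x => if h : x ∈ X then g ⟨x, h⟩ else 0)
    refine this.1 ?_
    have h2 : (fun x : X' => if h : (x : F) ∈ X then g ⟨x, h⟩ else 0) = g := by
      funext x
      exact dif_pos x.2
    rw [h2]
    exact g.contMDiff.contMDiffAt
  · intro x hx
    simp only [hx, dif_pos]
    exact hg ⟨x, hx⟩

end aux

lemma submanifold_locRetr {n k : ℕ} {S : Set (Euc n)} (hS : IsSubmanifoldOfDim k S) :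
    ∀ p ∈ S, ∃ O ρ, p ∈ O ∧ IsLocRetr S O ρ := by
  intro p hp
  obtain ⟨U, V, φ, ψ, K, -, hU, hV, hpU, hφ, hψ, hφm, hψm, hl, hr, hSU⟩ := hS p hp
  let P : Euc n →L[ℝ] Euc n := K.starProjection
  have hPK : ∀ w ∈ K, P w = w := fun w hw => Submodule.starProjection_eq_self_iff.2 hw
  have hP : ∀ w, P w ∈ K := fun w => Submodule.starProjection_apply_mem K w
  have hK : ∀ y ∈ S ∩ U, φ y ∈ K := fun y hy => by
    rw [hSU] at hy
    exact hy.2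
  have hc : ContDiffOn ℝ (⊤ : ℕ∞) (fun y => P (φ y)) U := P.contDiff.comp_contDiffOn hφ
  refine ⟨U ∩ (fun y => P (φ y)) ⁻¹' V, fun y => ψ (P (φ y)), ⟨hpU, ?_⟩,
    hc.continuousOn.isOpen_inter_preimage hU hV, ?_, ?_, ?_⟩
  · show P (φ p) ∈ V
    rw [hPK _ (hK p ⟨hp, hpU⟩)]
    exact hφm hpU
  · exact hψ.comp (hc.mono inter_subset_left) (fun y hy => hy.2)
  · rintro y ⟨-, hy⟩
    have h1 : ψ (P (φ y)) ∈ U ∩ φ ⁻¹' (K : Set (Euc n)) :=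
      ⟨hψm hy, by rw [mem_preimage, hr _ hy]; exact hP _⟩
    rw [← hSU] at h1
    exact h1.1
  · rintro y ⟨hy, hyU, -⟩
    show ψ (P (φ y)) = y
    rw [hPK _ (hK y ⟨hy, hyU⟩), hl y hyU]


/-- Homotopic smooth maps are smoothly homotopic; if the (continuous) homotopy is relative
to a closed subset `A ⊂ M`, then a smooth homotopy relative to `A` exists. -/
theorem smooth_homotopy_of_homotopy (a b m dN : ℕ) (M : Set (Euc a)) (N : Set (Euc b))
    (hM : IsSubmanifoldOfDim m M) (hN : IsSubmanifoldOfDim dN N)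
    (f g : Euc a → Euc b)
    (Vf : Set (Euc a)) (hVf : IsOpen Vf) (hMVf : M ⊆ Vf) (hf : ContDiffOn ℝ (⊤ : ℕ∞) f Vf)
    (Vg : Set (Euc a)) (hVg : IsOpen Vg) (hMVg : M ⊆ Vg) (hg : ContDiffOn ℝ (⊤ : ℕ∞) g Vg)
    (hfmaps : MapsTo f M N) (hgmaps : MapsTo g M N)
    (A C : Set (Euc a)) (hC : IsClosed C) (hA : A = M ∩ C)
    -- a continuous homotopy from f to g, relative to A
    (H : Euc a × ℝ → Euc b) (hH : ContinuousOn H (M ×ˢ Icc (0:ℝ) 1))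
    (hHmaps : MapsTo H (M ×ˢ Icc (0:ℝ) 1) N)
    (hH0 : ∀ x ∈ M, H (x, 0) = f x) (hH1 : ∀ x ∈ M, H (x, 1) = g x)
    (hHA : ∀ x ∈ A, ∀ t ∈ Icc (0:ℝ) 1, H (x, t) = f x) :
    -- then there is a smooth homotopy from f to g, relative to A
    ∃ K : Euc a × ℝ → Euc b,
      (∃ W : Set (Euc a × ℝ), IsOpen W ∧ M ×ˢ Icc (0:ℝ) 1 ⊆ W ∧
        ContDiffOn ℝ (⊤ : ℕ∞) K W) ∧
      MapsTo K (M ×ˢ Icc (0:ℝ) 1) N ∧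
      (∀ x ∈ M, K (x, 0) = f x) ∧ (∀ x ∈ M, K (x, 1) = g x) ∧
      (∀ x ∈ A, ∀ t ∈ Icc (0:ℝ) 1, K (x, t) = f x) := by
  obtain ⟨X, r, hMX, hX, hr, hrm, hrid⟩ := exists_retraction (submanifold_locRetr hM)
  obtain ⟨Ω, s, hNΩ, hΩ, hs, hsm, hsid⟩ := exists_retraction (submanifold_locRetr hN)
  obtain ⟨δ, hδ, hδΩ⟩ := exists_delta hΩ
  let cl : ℝ → ℝ := fun t => max 0 (min 1 t)
  have hcl : ∀ t, cl t ∈ Icc (0:ℝ) 1 := fun t => ⟨le_max_left _ _, by simp [cl]⟩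
  have hclid : ∀ t ∈ Icc (0:ℝ) 1, cl t = t := fun t ht => by simp [cl, ht.1, ht.2]
  have hcl0 : ∀ t ≤ 0, cl t = 0 := fun t ht => by
    simp only [cl]; exact max_eq_left ((min_le_right _ _).trans ht)
  have hcl1 : ∀ t, 1 ≤ t → cl t = 1 := fun t ht => by simp [cl, ht]
  let H' : Euc a × ℝ → Euc b := fun q => H (r q.1, cl q.2)
  let Y : Set (Euc a × ℝ) := X ×ˢ univ
  have hY : IsOpen Y := hX.prod isOpen_univ
  have hrY : ContinuousOn (fun q : Euc a × ℝ => r q.1) Y :=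
    hr.continuousOn.comp continuousOn_fst (fun q hq => hq.1)
  have hH'c : ContinuousOn H' Y := by
    refine hH.comp (hrY.prodMk (Continuous.continuousOn (by fun_prop))) ?_
    intro q hq
    exact ⟨hrm hq.1, hcl _⟩
  have hH'm : ∀ q ∈ Y, H' q ∈ N := fun q hq => hHmaps ⟨hrm hq.1, hcl _⟩
  let B : Set (Euc a × ℝ) := {q | q.2 ≤ 0 ∨ 1 ≤ q.2 ∨ r q.1 ∈ C}
  have hfr : ContDiffOn ℝ (⊤ : ℕ∞) (fun q : Euc a × ℝ => f (r q.1)) Y :=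
    hf.comp (hr.comp contDiffOn_fst (fun q hq => hq.1)) (fun q hq => hMVf (hrm hq.1))
  have hgr : ContDiffOn ℝ (⊤ : ℕ∞) (fun q : Euc a × ℝ => g (r q.1)) Y :=
    hg.comp (hr.comp contDiffOn_fst (fun q hq => hq.1)) (fun q hq => hMVg (hrm hq.1))
  have hBf : ∀ q ∈ Y, q ∈ B → q.2 < 1 → H' q = f (r q.1) := by
    rintro q hq (h | h | h) h1
    · simp only [H', hcl0 _ h]; exact hH0 _ (hrm hq.1)
    · linarith
    · exact hHA _ (hA ▸ ⟨hrm hq.1, h⟩) _ (hcl _)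
  have hBg : ∀ q ∈ Y, q ∈ B → 0 < q.2 → H' q = g (r q.1) := by
    rintro q hq (h | h | h) h1
    · linarith
    · simp only [H', hcl1 _ h]; exact hH1 _ (hrm hq.1)
    · have hh : r q.1 ∈ A := hA ▸ ⟨hrm hq.1, h⟩
      rw [← hH1 _ (hrm hq.1), hHA _ hh 1 (by simp)]
      exact hHA _ hh _ (hcl _)
  have hloc : ∀ q ∈ Y, ∃ c : Euc a × ℝ → Euc b, ∃ U : Set (Euc a × ℝ), IsOpen U ∧ q ∈ U ∧ U ⊆ Y ∧
      ContDiffOn ℝ (⊤ : ℕ∞) c U ∧ c q = H' q ∧ ∀ y ∈ U, y ∈ B → c y = H' y := by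
    intro q hq
    by_cases hqB : q ∈ B
    · by_cases h1 : q.2 < 1
      · refine ⟨fun q => f (r q.1), Y ∩ {q | q.2 < 1},
          hY.inter (isOpen_lt continuous_snd continuous_const), ⟨hq, h1⟩, inter_subset_left,
          hfr.mono inter_subset_left, (hBf q hq hqB h1).symm, ?_⟩
        rintro y ⟨hy, hy1⟩ hyB
        exact (hBf y hy hyB hy1).symm
      · have h0 : 0 < q.2 := by linarith
        refine ⟨fun q => g (r q.1), Y ∩ {q | 0 < q.2},
          hY.inter (isOpen_lt continuous_const continuous_snd), ⟨hq, h0⟩, inter_subset_left,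
          hgr.mono inter_subset_left, (hBg q hq hqB h0).symm, ?_⟩
        rintro y ⟨hy, hy1⟩ hyB
        exact (hBg y hy hyB hy1).symm
    · have hBo : IsOpen (Y ∩ Bᶜ) := by
        have h1 : IsOpen (Y ∩ (fun q : Euc a × ℝ => r q.1) ⁻¹' Cᶜ) :=
          hrY.isOpen_inter_preimage hY hC.isOpen_compl
        have h2 : IsOpen {q : Euc a × ℝ | 0 < q.2} := isOpen_lt continuous_const continuous_snd
        have h3 : IsOpen {q : Euc a × ℝ | q.2 < 1} := isOpen_lt continuous_snd continuous_const
        convert (h1.inter h2).inter h3 using 1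
        ext q
        simp only [B, mem_inter_iff, mem_compl_iff, mem_setOf_eq, mem_preimage, not_or, not_le]
        tauto
      refine ⟨fun _ => H' q, Y ∩ Bᶜ, hBo, ⟨hq, hqB⟩, inter_subset_left, contDiffOn_const, rfl, ?_⟩
      rintro y ⟨-, hy⟩ hyB
      exact absurd hyB hy
  obtain ⟨k, hk, hkt⟩ := exists_smooth_section hY
    (fun q => Metric.ball (H' q) (δ (H' q)) ∩ {y | q ∈ B → y = H' q})
    (by
      intro q hq
      refine (convex_ball _ _).inter ?_
      by_cases hqB : q ∈ B
      · simpa [hqB] using convex_singleton (H' q)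
      · simpa [hqB] using convex_univ)
    (by
      intro q hq
      obtain ⟨c, U, hU, hqU, hUY, hc, hcq, hcB⟩ := hloc q hq
      have hcont : ContinuousOn (fun y => δ (H' y) - dist (c y) (H' y)) U :=
        (hδ.comp_continuousOn (hH'c.mono hUY)).sub (continuous_dist.comp_continuousOn (hc.continuousOn.prodMk (hH'c.mono hUY)))
      have ho := hcont.isOpen_inter_preimage hU (isOpen_Ioi (a := (0:ℝ)))
      refine ⟨c, _, ho.mem_nhds ⟨hqU, ?_⟩, hc.mono inter_subset_left, ?_⟩
      · simp only [mem_preimage, hcq, dist_self, sub_zero]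
        exact (hδΩ _ (hNΩ (hH'm q hq))).1
      · rintro y ⟨⟨hyU, hy⟩, -⟩
        refine ⟨?_, hcB y hyU⟩
        rw [mem_preimage, mem_Ioi] at hy
        rw [Metric.mem_ball]
        linarith)
  have hkΩ : MapsTo k Y Ω := fun q hq => (hδΩ _ (hNΩ (hH'm q hq))).2 (hkt q hq).1
  have hMY : M ×ˢ Icc (0:ℝ) 1 ⊆ Y := fun q hq => ⟨hMX hq.1, mem_univ _⟩
  have hval : ∀ x ∈ M, ∀ t ∈ Icc (0:ℝ) 1, (x, t) ∈ B → s (k (x, t)) = H (x, t) := by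
    intro x hx t ht hB
    have hq : (x, t) ∈ Y := hMY ⟨hx, ht⟩
    have h1 : k (x, t) = H' (x, t) := (hkt _ hq).2 hB
    have h2 : H' (x, t) = H (x, t) := by
      simp only [H', hclid t ht, hrid x ⟨hx, hMX hx⟩]
    rw [h1, hsid _ ⟨hH'm _ hq, hNΩ (hH'm _ hq)⟩, h2]
  refine ⟨fun q => s (k q), ⟨Y, hY, hMY, hs.comp hk hkΩ⟩, fun q hq => hsm (hkΩ (hMY hq)), ?_, ?_, ?_⟩
  · intro x hx
    rw [← hH0 x hx]
    exact hval x hx 0 (by simp) (Or.inl le_rfl)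
  · intro x hx
    rw [← hH1 x hx]
    exact hval x hx 1 (by simp) (Or.inr (Or.inl le_rfl))
  · intro x hx t ht
    rw [← hHA x hx t ht]
    have hx' : x ∈ M ∩ C := hA ▸ hx
    refine hval x hx'.1 t ht (Or.inr (Or.inr ?_))
    show r x ∈ C
    rw [hrid x ⟨hx'.1, hMX hx'.1⟩]
    exact hx'.2
end
end

section
/- (Product Neighborhood Theorem) Let (M, ν) be a closed k-dimensional framed submanifold of ℝ^{n+k}, i.e., ν assigns smoothly to each x ∈ M a basis ν(x) = (ν₁(x),…,ν_n(x)) of the normal space N_xM. Then there is an open neighborhood U of M in ℝ^{n+k} and a diffeomorphism M × ℝ^n → U sending each (x,0) to x and such that the differential at (x,0) carries the standard basis of ℝ^n to the frame ν(x). -/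
/- Framework: embedded submanifolds of Euclidean space (Guillemin–Pollack style),
tangent spaces via velocity vectors of curves, local-straightening charts. -/

noncomputable section
open Set Function
open scoped RealInnerProductSpace

open Topology in
lemma pn_ift {E F : Type*} [NormedAddCommGroup E] [NormedSpace ℝ E] [CompleteSpace E]
    [NormedAddCommGroup F] [NormedSpace ℝ F]
    (f : E → F) (s : Set E) (hs : IsOpen s) (hf : ContDiffOn ℝ (⊤ : ℕ∞) f s)
    (a : E) (ha : a ∈ s) (f' : E ≃L[ℝ] F) (hf' : HasFDerivAt f (f' : E →L[ℝ] F) a) :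
    ∃ e : OpenPartialHomeomorph E F, a ∈ e.source ∧ e.source ⊆ s ∧ (∀ x, e x = f x) ∧
      ContDiffOn ℝ (⊤ : ℕ∞) e.symm e.target := by
  have hn : ((⊤ : ℕ∞) : WithTop ℕ∞) ≠ 0 := by simp
  have hca : ContDiffAt ℝ (⊤ : ℕ∞) f a := hf.contDiffAt (hs.mem_nhds ha)
  set t : Set E := s ∩ fderiv ℝ f ⁻¹' (range ((↑) : (E ≃L[ℝ] F) → E →L[ℝ] F)) with ht
  have hto : IsOpen t :=
    (hf.continuousOn_fderiv_of_isOpen hs (by simp)).isOpen_inter_preimage hs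
      ContinuousLinearEquiv.isOpen
  have hat : a ∈ t := ⟨ha, ⟨f', hf'.fderiv.symm⟩⟩
  set e := (hca.toOpenPartialHomeomorph f hf' hn).restrOpen t hto with he
  have hes : e.source ⊆ t := by
    intro x hx
    rw [he, OpenPartialHomeomorph.restrOpen_source] at hx
    exact hx.2
  have hef : ∀ x, e x = f x := fun x => rfl
  refine ⟨e, ?_, hes.trans inter_subset_left, hef, ?_⟩
  · rw [he, OpenPartialHomeomorph.restrOpen_source]
    exact ⟨hca.mem_toOpenPartialHomeomorph_source hf' hn, hat⟩
  · intro u hu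
    have h1 := hes (e.map_target hu)
    obtain ⟨g, hg⟩ := h1.2
    have hcu : ContDiffAt ℝ (⊤ : ℕ∞) f (e.symm u) := hf.contDiffAt (hs.mem_nhds h1.1)
    refine (e.contDiffAt_symm (f₀' := g) hu ?_ ?_).contDiffWithinAt
    · rw [hg]
      exact (hcu.differentiableAt hn).hasFDerivAt
    · exact hcu

/-- The unit-speed-at-zero diffeomorphism onto a ball. -/
lemma pn_ball (n : ℕ) (ε : ℝ) (hε : 0 < ε) :
    ∃ σ τ : Euc n → Euc n, ContDiff ℝ (⊤ : ℕ∞) σ ∧ ContDiffOn ℝ (⊤ : ℕ∞) τ (Metric.ball 0 ε) ∧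
      (∀ v, σ v ∈ Metric.ball (0 : Euc n) ε) ∧ (∀ v, τ (σ v) = v) ∧
      (∀ w ∈ Metric.ball (0 : Euc n) ε, σ (τ w) = w) ∧ σ 0 = 0 ∧
      HasFDerivAt σ (ContinuousLinearMap.id ℝ (Euc n)) 0 := by
  let e : OpenPartialHomeomorph (Euc n) (Euc n) := OpenPartialHomeomorph.univUnitBall
  have hmap : ∀ w ∈ Metric.ball (0 : Euc n) ε, ε⁻¹ • w ∈ Metric.ball (0 : Euc n) 1 := by
    intro w hw
    rw [mem_ball_zero_iff] at hw ⊢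
    rw [norm_smul, norm_inv, Real.norm_of_nonneg hε.le, inv_mul_lt_iff₀ hε]
    simpa using hw
  have hball : ∀ v, e v ∈ Metric.ball (0 : Euc n) 1 := fun v => e.map_source (mem_univ v)
  have hd : HasFDerivAt e (ContinuousLinearMap.id ℝ (Euc n)) 0 := by
    have h1 : ContDiff ℝ 1 (fun x : Euc n => (√(1 + ‖x‖ ^ 2 : ℝ))⁻¹) := by
      have h : ∀ x : Euc n, (0 : ℝ) < (1 : ℝ) + ‖x‖ ^ 2 := fun x => by positivity
      refine ContDiff.inv ?_ fun x => Real.sqrt_ne_zero'.mpr (h x)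
      exact (contDiff_const.add <| contDiff_norm_sq ℝ).sqrt fun x => (h x).ne'
    have h2 := ((h1.differentiable (by simp)) 0).hasFDerivAt
    have h3 := h2.smul (hasFDerivAt_id (𝕜 := ℝ) (0 : Euc n))
    refine h3.congr_fderiv ?_
    ext v
    simp
  refine ⟨fun v => ε • e (ε⁻¹ • v), fun w => ε • e.symm (ε⁻¹ • w), ?_, ?_, ?_, ?_, ?_, ?_, ?_⟩
  · exact (OpenPartialHomeomorph.contDiff_univUnitBall.comp (contDiff_id.const_smul ε⁻¹)).const_smul ε
  · exact (OpenPartialHomeomorph.contDiffOn_univUnitBall_symm.comp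
      (contDiff_id.const_smul ε⁻¹).contDiffOn hmap).const_smul ε
  · intro v
    have := hball (ε⁻¹ • v)
    rw [mem_ball_zero_iff] at this ⊢
    rw [norm_smul, Real.norm_of_nonneg hε.le]
    nlinarith
  · intro v
    simp only [inv_smul_smul₀ hε.ne']
    rw [e.left_inv (mem_univ _), smul_inv_smul₀ hε.ne']
  · intro w hw
    simp only [inv_smul_smul₀ hε.ne']
    rw [e.right_inv (hmap w hw), smul_inv_smul₀ hε.ne']
  · simp [e, OpenPartialHomeomorph.univUnitBall]
  · have h0 : HasFDerivAt (fun v : Euc n => ε⁻¹ • v) (ε⁻¹ • ContinuousLinearMap.id ℝ (Euc n)) 0 :=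
      (hasFDerivAt_id (𝕜 := ℝ) (0 : Euc n)).const_smul ε⁻¹
    have hd' : HasFDerivAt e (ContinuousLinearMap.id ℝ (Euc n)) ((fun v : Euc n => ε⁻¹ • v) 0) := by
      simpa using hd
    refine ((hd'.comp 0 h0).const_smul ε).congr_fderiv ?_
    ext v
    simp [hε.ne']

open Topology Manifold in
lemma pn_extend {n k : ℕ} {M : Set (Euc (n + k))} (hMc : IsClosed M) (hM : IsSubmanifoldOfDim k M)
    (f : Euc (n + k) → Euc (n + k)) (hf : ContDiffOn ℝ (⊤ : ℕ∞) f M) :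
    ∃ g : Euc (n + k) → Euc (n + k), ContDiff ℝ (⊤ : ℕ∞) g ∧ ∀ x ∈ M, g x = f x := by
  let t : Euc (n + k) → Set (Euc (n + k)) := fun x => {y | x ∈ M → y = f x}
  have key : ∃ g : C^(⊤ : ℕ∞)⟮𝓘(ℝ, Euc (n + k)), Euc (n + k); 𝓘(ℝ, Euc (n + k)), Euc (n + k)⟯,
      ∀ x, g x ∈ t x := by
    apply exists_contMDiffMap_forall_mem_convex_of_local
    · intro x
      by_cases hx : x ∈ M
      · have : t x = {f x} := by ext y; simp [t, hx]
        rw [this]; exact convex_singleton _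
      · have : t x = univ := by ext y; simp [t, hx]
        rw [this]; exact convex_univ
    · intro x
      by_cases hx : x ∈ M
      · obtain ⟨U, V, φ, ψ, K, -, hU, hV, hxU, hφ, hψ, hφm, hψm, hl, hr, hS⟩ := hM x hx
        let π : Euc (n + k) →L[ℝ] Euc (n + k) := K.starProjection
        have hπ : ∀ z ∈ K, π z = z := fun z hz => Submodule.starProjection_eq_self_iff.2 hz
        have hπK : ∀ z, π z ∈ K := fun z => Submodule.starProjection_apply_mem K z
        have hMK : ∀ y ∈ M, y ∈ U → φ y ∈ K := fun y hy hyU => by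
          have : y ∈ M ∩ U := ⟨hy, hyU⟩
          rw [hS] at this; exact this.2
        have hKM : ∀ z ∈ V, z ∈ K → ψ z ∈ M := fun z hz hzK => by
          have : ψ z ∈ U ∩ φ ⁻¹' (K : Set (Euc (n + k))) :=
            ⟨hψm hz, by rw [mem_preimage, hr z hz]; exact hzK⟩
          rw [← hS] at this; exact this.1
        have hc : ContinuousOn (fun y => π (φ y)) U :=
          π.continuous.comp_continuousOn hφ.continuousOn
        refine ⟨U ∩ (fun y => π (φ y)) ⁻¹' V, (hc.isOpen_inter_preimage hU hV).mem_nhds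
          ⟨hxU, ?_⟩, fun y => f (ψ (π (φ y))), ?_, ?_⟩
        · simp only [mem_preimage]
          rw [hπ _ (hMK x hx hxU)]; exact hφm hxU
        · rw [contMDiffOn_iff_contDiffOn]
          refine hf.comp (hψ.comp (π.contDiff.comp_contDiffOn (hφ.mono inter_subset_left)) ?_) ?_
          · exact fun y hy => hy.2
          · exact fun y hy => hKM _ hy.2 (hπK _)
        · intro y hy hyM
          simp only
          rw [hπ _ (hMK y hyM hy.1), hl y hy.1]
      · refine ⟨Mᶜ, hMc.isOpen_compl.mem_nhds hx, fun _ => 0, contMDiffOn_const, ?_⟩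
        intro y hy hyM
        exact absurd hyM hy
  obtain ⟨g, hg⟩ := key
  exact ⟨g, g.contMDiff.contDiff, fun x hx => hg x hx⟩

/-- The normal exponential-type map. -/
def pnF {n m : ℕ} (ν : Fin n → Euc m → Euc m) (p : Euc m × Euc n) : Euc m :=
  p.1 + ∑ i, p.2 i • ν i p.1

lemma pnF_contDiff {n m : ℕ} (ν : Fin n → Euc m → Euc m) (hν : ∀ i, ContDiff ℝ (⊤ : ℕ∞) (ν i)) :
    ContDiff ℝ (⊤ : ℕ∞) (pnF ν) := by
  unfold pnF
  refine contDiff_fst.add (ContDiff.sum fun i _ => ?_)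
  have h2 : ContDiff ℝ (⊤ : ℕ∞) (fun p : Euc m × Euc n => ν i p.1) := (hν i).comp contDiff_fst
  have h : ContDiff ℝ (⊤ : ℕ∞) (fun v : Euc n => v i) :=
    (EuclideanSpace.proj (𝕜 := ℝ) i : Euc n →L[ℝ] ℝ).contDiff
  have h3 : ContDiff ℝ (⊤ : ℕ∞) (fun p : Euc m × Euc n => p.2 i) := h.comp contDiff_snd
  exact h3.smul h2

lemma pnF_zero {n m : ℕ} (ν : Fin n → Euc m → Euc m) (x : Euc m) : pnF ν (x, 0) = x := by
  simp [pnF]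

lemma pnF_deriv {n m : ℕ} (ν : Fin n → Euc m → Euc m) (hν : ∀ i, ContDiff ℝ (⊤ : ℕ∞) (ν i))
    (x : Euc m) : ∃ L : Euc m × Euc n →L[ℝ] Euc m, HasFDerivAt (pnF ν) L (x, 0) ∧
      ∀ w v, L (w, v) = w + ∑ i, v i • ν i x := by
  have h : ∀ i ∈ (Finset.univ : Finset (Fin n)),
      HasFDerivAt (fun p : Euc m × Euc n => p.2 i • ν i p.1)
      (((EuclideanSpace.proj (𝕜 := ℝ) i).comp (ContinuousLinearMap.snd ℝ (Euc m) (Euc n))).smulRight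
        (ν i x)) (x, 0) := by
    intro i _
    have h1 : HasFDerivAt (fun p : Euc m × Euc n => p.2 i)
      ((EuclideanSpace.proj (𝕜 := ℝ) i).comp (ContinuousLinearMap.snd ℝ (Euc m) (Euc n))) (x, 0) :=
      ((EuclideanSpace.proj (𝕜 := ℝ) i : Euc n →L[ℝ] ℝ).comp
        (ContinuousLinearMap.snd ℝ (Euc m) (Euc n))).hasFDerivAt
    have h2 : DifferentiableAt ℝ (fun p : Euc m × Euc n => ν i p.1) (x, 0) :=
      (((hν i).comp contDiff_fst).differentiable (by simp)) _
    refine (h1.smul h2.hasFDerivAt).congr_fderiv ?_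
    ext v <;> simp
  refine ⟨_, hasFDerivAt_fst.add (HasFDerivAt.fun_sum h), ?_⟩
  intro w v
  simp

open Topology in
lemma pn_tangent {E : Type*} [NormedAddCommGroup E] [NormedSpace ℝ E] (M : Set E) (x w : E)
    (hx : x ∈ M) (γ : ℝ → E) (h0 : γ 0 = x) (hγ : ∀ᶠ t in 𝓝 (0 : ℝ), γ t ∈ M)
    (hd : HasDerivAt γ w 0) : w ∈ tangentSpaceOf M x := by
  classical
  apply Submodule.subset_span
  refine ⟨fun t => if γ t ∈ M then γ t else x, ?_, ?_, ?_⟩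
  · intro t
    by_cases h : γ t ∈ M
    · simp [h]
    · simp [h, hx]
  · simp [h0]
  · refine hd.congr_of_eventuallyEq ?_
    filter_upwards [hγ] with t ht
    simp [ht]

open Topology in
lemma pn_local {n k : ℕ} {M : Set (Euc (n + k))} (hM : IsSubmanifoldOfDim k M)
    (ν : Fin n → Euc (n + k) → Euc (n + k)) (hν : ∀ i, ContDiff ℝ (⊤ : ℕ∞) (ν i))
    (hν_normal : ∀ x ∈ M, ∀ i, ν i x ∈ (tangentSpaceOf M x)ᗮ)
    (hν_indep : ∀ x ∈ M, LinearIndependent ℝ fun i => ν i x)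
    (x : Euc (n + k)) (hx : x ∈ M) :
    ∃ (O : Set (Euc (n + k) × Euc n)) (V : Set (Euc (n + k)))
      (Ψ : Euc (n + k) → Euc (n + k) × Euc n), IsOpen O ∧ IsOpen V ∧ (x, 0) ∈ O ∧
      ContDiffOn ℝ (⊤ : ℕ∞) Ψ V ∧
      (∀ p ∈ O, p.1 ∈ M → pnF ν p ∈ V ∧ Ψ (pnF ν p) = p) ∧
      (∀ u ∈ V, Ψ u ∈ O ∧ (Ψ u).1 ∈ M ∧ pnF ν (Ψ u) = u) := by
  obtain ⟨U, V, φ, ψ, K, hK, hU, hV, hxU, hφ, hψ, hφm, hψm, hl, hr, hS⟩ := hM x hx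
  have hMK : ∀ y ∈ M, y ∈ U → φ y ∈ K := fun y hy hyU => by
    have : y ∈ M ∩ U := ⟨hy, hyU⟩
    rw [hS] at this; exact this.2
  have hKM : ∀ z ∈ V, z ∈ K → ψ z ∈ M := fun z hz hzK => by
    have : ψ z ∈ U ∩ φ ⁻¹' (K : Set (Euc (n + k))) :=
      ⟨hψm hz, by rw [mem_preimage, hr z hz]; exact hzK⟩
    rw [← hS] at this; exact this.1
  let π : Euc (n + k) →L[ℝ] K := K.orthogonalProjectionOnto
  have hπ : ∀ z : K, π z = z := fun z => Submodule.orthogonalProjectionOnto_mem_subspace_eq_self z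
  have hπ' : ∀ z ∈ K, (π z : Euc (n + k)) = z := fun z hz => by
    have := hπ ⟨z, hz⟩
    exact congrArg Subtype.val this
  let z0 : K := ⟨φ x, hMK x hx hxU⟩
  have hz0V : (z0 : Euc (n + k)) ∈ V := hφm hxU
  have hψz0 : ψ z0 = x := hl x hxU
  let H : K × Euc n → Euc (n + k) × Euc n := fun q => (ψ q.1, q.2)
  let G : K × Euc n → Euc (n + k) := fun q => pnF ν (H q)
  let s : Set (K × Euc n) := {q | (q.1 : Euc (n + k)) ∈ V}
  have hs : IsOpen s := hV.preimage (continuous_subtype_val.comp continuous_fst)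
  have hHc : ContDiffOn ℝ (⊤ : ℕ∞) H s := by
    refine ContDiffOn.prodMk ?_ contDiff_snd.contDiffOn
    exact hψ.comp (K.subtypeL.contDiff.comp contDiff_fst).contDiffOn fun q hq => hq
  have hGc : ContDiffOn ℝ (⊤ : ℕ∞) G s := (pnF_contDiff ν hν).comp_contDiffOn hHc
  obtain ⟨L, hL, hLv⟩ := pnF_deriv ν hν x
  have hψd : HasFDerivAt ψ (fderiv ℝ ψ z0) z0 :=
    ((hψ.contDiffAt (hV.mem_nhds hz0V)).differentiableAt (by simp)).hasFDerivAt
  have hφd : HasFDerivAt φ (fderiv ℝ φ x) (ψ z0) := by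
    rw [hψz0]
    exact ((hφ.contDiffAt (hU.mem_nhds hxU)).differentiableAt (by simp)).hasFDerivAt
  have hcompid : (fderiv ℝ φ x).comp (fderiv ℝ ψ z0) = ContinuousLinearMap.id ℝ _ := by
    refine (hφd.comp _ hψd).unique ((hasFDerivAt_id _).congr_of_eventuallyEq ?_)
    filter_upwards [hV.mem_nhds hz0V] with z hz
    exact hr z hz
  let A : K × Euc n →L[ℝ] Euc (n + k) × Euc n :=
    (((fderiv ℝ ψ z0).comp K.subtypeL).comp (ContinuousLinearMap.fst ℝ K (Euc n))).prod
      (ContinuousLinearMap.snd ℝ K (Euc n))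
  have hHd : HasFDerivAt H A (z0, 0) := by
    refine HasFDerivAt.prodMk ?_ hasFDerivAt_snd
    have h1 : HasFDerivAt (fun q : K × Euc n => (q.1 : Euc (n + k)))
      (K.subtypeL.comp (ContinuousLinearMap.fst ℝ K (Euc n))) (z0, 0) :=
      (K.subtypeL.comp (ContinuousLinearMap.fst ℝ K (Euc n))).hasFDerivAt
    exact HasFDerivAt.comp (z0, (0 : Euc n)) (g := ψ) (f := fun q : K × Euc n => (q.1 : Euc (n + k)))
      hψd h1
  have hGd : HasFDerivAt G (L.comp A) (z0, 0) := by
    refine HasFDerivAt.comp (z0, (0 : Euc n)) (g := pnF ν) (f := H) ?_ hHd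
    have : H (z0, 0) = (x, 0) := by simp [H, hψz0]
    rw [this]; exact hL
  have hTan : ∀ w : K, fderiv ℝ ψ z0 w ∈ tangentSpaceOf M x := by
    intro w
    have hline : HasDerivAt (fun t : ℝ => (z0 : Euc (n + k)) + t • (w : Euc (n + k)))
        (w : Euc (n + k)) 0 := by
      simpa using ((hasDerivAt_id (0 : ℝ)).smul_const (w : Euc (n + k))).const_add
        (z0 : Euc (n + k))
    refine pn_tangent M x _ hx (fun t : ℝ => ψ (z0 + t • (w : Euc (n + k)))) (by simp [hψz0]) ?_ ?_
    · have hc := hline.continuousAt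
      have : ∀ᶠ t in 𝓝 (0 : ℝ), (z0 : Euc (n + k)) + t • (w : Euc (n + k)) ∈ V := by
        apply hc.eventually_mem
        apply hV.mem_nhds
        simpa using hz0V
      filter_upwards [this] with t ht
      exact hKM _ ht (K.add_mem z0.2 (K.smul_mem _ w.2))
    · have h2 : HasFDerivAt ψ (fderiv ℝ ψ z0) ((z0 : Euc (n + k)) + (0 : ℝ) • (w : Euc (n + k))) := by
        simpa using hψd
      exact h2.comp_hasDerivAt (0 : ℝ) hline
  have hinj : Function.Injective ((L.comp A : K × Euc n →L[ℝ] Euc (n + k)) :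
      K × Euc n →ₗ[ℝ] Euc (n + k)) := by
    rw [← LinearMap.ker_eq_bot, LinearMap.ker_eq_bot']
    rintro ⟨w, v⟩ h
    have h : fderiv ℝ ψ z0 w + ∑ i, v i • ν i x = 0 := by
      rw [← hLv]; exact h
    have hb : (∑ i, v i • ν i x) ∈ (tangentSpaceOf M x)ᗮ :=
      Submodule.sum_mem _ fun i _ => Submodule.smul_mem _ _ (hν_normal x hx i)
    have hin : inner ℝ (fderiv ℝ ψ z0 w) (∑ i, v i • ν i x) = 0 :=
      (Submodule.mem_orthogonal _ _).1 hb _ (hTan w)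
    have hb0 : (∑ i, v i • ν i x) = 0 := by
      rw [eq_neg_of_add_eq_zero_left h, inner_neg_left, neg_eq_zero, inner_self_eq_zero] at hin
      exact hin
    rw [hb0, add_zero] at h
    have hv : v = 0 := by
      have := Fintype.linearIndependent_iff.1 (hν_indep x hx) (fun i => v i) hb0
      ext i; simpa using this i
    have hw : w = 0 := by
      have := congrArg (fun T => T (w : Euc (n + k))) hcompid
      simp [h] at this
      exact Subtype.ext this.symm
    rw [hv, hw]; rfl
  have hdim : Module.finrank ℝ (K × Euc n) = Module.finrank ℝ (Euc (n + k)) := by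
    rw [Module.finrank_prod, hK]; simp [add_comm]
  let f' : (K × Euc n) ≃L[ℝ] Euc (n + k) :=
    (LinearEquiv.ofInjectiveOfFinrankEq _ hinj hdim).toContinuousLinearEquiv
  have hf' : (f' : K × Euc n →L[ℝ] Euc (n + k)) = L.comp A := by
    ext q <;> rfl
  obtain ⟨e, hae, hes, heG, hesm⟩ := pn_ift G s hs hGc (z0, 0) hz0V f' (by rw [hf']; exact hGd)
  have hOc : ContinuousOn (fun p : Euc (n + k) × Euc n => (π (φ p.1), p.2)) (U ×ˢ univ) := by
    refine ContinuousOn.prodMk (π.continuous.comp_continuousOn ?_) continuousOn_snd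
    exact hφ.continuousOn.comp continuousOn_fst fun p hp => hp.1
  refine ⟨(U ×ˢ univ) ∩ (fun p : Euc (n + k) × Euc n => (π (φ p.1), p.2)) ⁻¹' e.source, e.target,
    fun u => H (e.symm u), hOc.isOpen_inter_preimage (hU.prod isOpen_univ) e.open_source,
    e.open_target, ⟨⟨hxU, mem_univ _⟩, ?_⟩, ?_, ?_, ?_⟩
  · have : π (φ x) = z0 := hπ z0
    simp only [mem_preimage, this]
    exact hae
  · exact hHc.comp hesm fun u hu => hes (e.map_target hu)
  · rintro ⟨y, v⟩ ⟨⟨hyU, -⟩, hp⟩ hyM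
    simp only at hyU hyM
    simp only [mem_preimage] at hp
    have hH : H (π (φ y), v) = (y, v) := by
      simp only [H]
      rw [hπ' _ (hMK y hyM hyU), hl y hyU]
    have hFe : pnF ν (y, v) = e (π (φ y), v) := by
      rw [heG, ← hH]
    refine ⟨?_, ?_⟩
    · rw [hFe]; exact e.map_source hp
    · rw [hFe]
      simp only
      rw [e.left_inv hp, hH]
  · intro u hu
    have hsrc := e.map_target hu
    have hzV : ((e.symm u).1 : Euc (n + k)) ∈ V := hes hsrc
    refine ⟨⟨⟨hψm hzV, mem_univ _⟩, ?_⟩, hKM _ hzV (e.symm u).1.2, ?_⟩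
    · simp only [mem_preimage, H]
      rw [hr _ hzV, hπ]
      exact hsrc
    · have := e.right_inv hu
      rw [heG] at this
      exact this

/-- **Product Neighborhood Theorem.** Let `(M, ν)` be a closed `k`-dimensional framed
submanifold of `ℝ^{n+k}` (`ν` smoothly assigns to each `x ∈ M` a basis of the normal space
`(T_xM)ᗮ`). Then there are an open neighborhood `U` of `M` and a diffeomorphism
`Φ : M × ℝ^n → U` sending each `(x,0)` to `x` whose differential at `(x,0)` carries the
standard basis of `ℝ^n` to the frame `ν(x)`. -/
theorem product_neighborhood (n k : ℕ) (M : Set (Euc (n + k)))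
    (hMc : IsCompact M) (hM : IsSubmanifoldOfDim k M)
    (ν : Fin n → Euc (n + k) → Euc (n + k))
    (hν_smooth : ∀ i, ContDiffOn ℝ (⊤ : ℕ∞) (ν i) M)
    (hν_normal : ∀ x ∈ M, ∀ i, ν i x ∈ (tangentSpaceOf M x)ᗮ)
    (hν_indep : ∀ x ∈ M, LinearIndependent ℝ fun i => ν i x)
    (hν_span : ∀ x ∈ M,
      Submodule.span ℝ (Set.range fun i => ν i x) = (tangentSpaceOf M x)ᗮ) :
    ∃ (U : Set (Euc (n + k))) (Φ : Euc (n + k) × Euc n → Euc (n + k))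
      (Ψ : Euc (n + k) → Euc (n + k) × Euc n) (W : Set (Euc (n + k) × Euc n)),
      IsOpen U ∧ M ⊆ U ∧
      IsOpen W ∧ M ×ˢ (univ : Set (Euc n)) ⊆ W ∧ ContDiffOn ℝ (⊤ : ℕ∞) Φ W ∧
      -- Φ is a diffeomorphism from M × ℝⁿ onto U, with smooth inverse Ψ
      BijOn Φ (M ×ˢ (univ : Set (Euc n))) U ∧
      ContDiffOn ℝ (⊤ : ℕ∞) Ψ U ∧
      (∀ p ∈ M ×ˢ (univ : Set (Euc n)), Ψ (Φ p) = p) ∧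
      (∀ u ∈ U, Ψ u ∈ M ×ˢ (univ : Set (Euc n)) ∧ Φ (Ψ u) = u) ∧
      -- (x, 0) is sent to x
      (∀ x ∈ M, Φ (x, 0) = x) ∧
      -- the differential at (x,0) carries the standard basis of ℝⁿ to the frame ν(x)
      (∀ x ∈ M, ∀ i : Fin n,
        fderiv ℝ Φ (x, 0) (0, EuclideanSpace.single i (1:ℝ)) = ν i x) := by
  classical
  have hex := fun i => pn_extend hMc.isClosed hM (ν i) (hν_smooth i)
  choose μ hμs hμ using hex
  have hloc := pn_local hM μ hμs
    (fun x hx i => by rw [hμ i x hx]; exact hν_normal x hx i)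
    (fun x hx => by
      have : (fun i => μ i x) = fun i => ν i x := funext fun i => hμ i x hx
      rw [this]; exact hν_indep x hx)
  have hF := pnF_contDiff μ hμs
  have : CompactSpace M := isCompact_iff_compactSpace.1 hMc
  -- a uniform radius
  have hrad : ∃ ε > 0, InjOn (pnF μ) (M ×ˢ Metric.ball (0 : Euc n) ε) ∧
      ∀ p ∈ M ×ˢ Metric.ball (0 : Euc n) ε, ∃ (O : Set (Euc (n + k) × Euc n))
        (V : Set (Euc (n + k)))
        (Ψ : Euc (n + k) → Euc (n + k) × Euc n), p ∈ O ∧ IsOpen V ∧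
        ContDiffOn ℝ (⊤ : ℕ∞) Ψ V ∧
        (∀ p ∈ O, p.1 ∈ M → pnF μ p ∈ V ∧ Ψ (pnF μ p) = p) ∧
        (∀ u ∈ V, Ψ u ∈ O ∧ (Ψ u).1 ∈ M ∧ pnF μ (Ψ u) = u) := by
    choose! O V Ψ hO hV hxO hΨ h1 h2 using hloc
    let j : M × Euc n → Euc (n + k) × Euc n := fun q => (q.1, q.2)
    have hj : Continuous j := (continuous_subtype_val.comp continuous_fst).prodMk continuous_snd
    let S : Set (M × Euc n) := univ ×ˢ {0}
    have hSc : IsCompact S := isCompact_univ.prod isCompact_singleton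
    obtain ⟨T, hT, hTinj⟩ := Set.InjOn.exists_mem_nhdsSet (f := fun q => pnF μ (j q)) (s := S)
      (by
        rintro ⟨a, v⟩ ⟨-, hv⟩ ⟨b, w⟩ ⟨-, hw⟩ hab
        simp only [mem_singleton_iff] at hv hw
        subst hv hw
        simp only [j, pnF_zero] at hab
        rw [Subtype.ext hab])
      hSc
      (fun q _ => (hF.continuous.comp hj).continuousAt)
      (by
        rintro ⟨a, v⟩ ⟨-, hv⟩
        simp only [mem_singleton_iff] at hv
        subst hv
        refine ⟨j ⁻¹' O a, ((hO a a.2).preimage hj).mem_nhds (hxO a a.2), ?_⟩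
        intro p hp q hq hpq
        have hpq' : pnF μ (j p) = pnF μ (j q) := hpq
        have hjj : j p = j q := by
          rw [← (h1 a a.2 _ hp p.1.2).2, ← (h1 a a.2 _ hq q.1.2).2, hpq']
        simp only [j, Prod.mk.injEq] at hjj
        exact Prod.ext (Subtype.ext hjj.1) hjj.2)
    have hT' : (⋃ a : M, j ⁻¹' O a) ∈ nhdsSet S := by
      refine (isOpen_iUnion fun a : M => (hO a a.2).preimage hj).mem_nhdsSet.2 ?_
      rintro ⟨a, v⟩ ⟨-, hv⟩
      simp only [mem_singleton_iff] at hv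
      subst hv
      exact mem_iUnion.2 ⟨a, hxO a a.2⟩
    obtain ⟨N, hN, hSN, hNT⟩ := mem_nhdsSet_iff_exists.1 (Filter.inter_mem hT hT')
    obtain ⟨u, v, hu, hv, hSu, hSv, huv⟩ :=
      generalized_tube_lemma isCompact_univ isCompact_singleton hN hSN
    obtain ⟨ε, hε, hball⟩ := Metric.isOpen_iff.1 hv 0 (hSv rfl)
    have hmem : ∀ p ∈ M ×ˢ Metric.ball (0 : Euc n) ε, ∃ q : M × Euc n, j q = p ∧
        q ∈ T ∩ (⋃ a : M, j ⁻¹' O a) := fun p hp =>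
      ⟨(⟨p.1, hp.1⟩, p.2), rfl, hNT (huv ⟨hSu (mem_univ _), hball hp.2⟩)⟩
    refine ⟨ε, hε, ?_, ?_⟩
    · intro p hp q hq hpq
      obtain ⟨p', rfl, hp'⟩ := hmem p hp
      obtain ⟨q', rfl, hq'⟩ := hmem q hq
      rw [hTinj hp'.1 hq'.1 hpq]
    · intro p hp
      obtain ⟨p', rfl, hp'⟩ := hmem p hp
      obtain ⟨a, ha⟩ := mem_iUnion.1 hp'.2
      exact ⟨O a, V a, Ψ a, ha, hV a a.2, hΨ a a.2, h1 a a.2, h2 a a.2⟩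
  obtain ⟨ε, hε, hinj, hlc⟩ := hrad
  obtain ⟨σ, τ, hσ, hτ, hσb, hτσ, hστ, hσ0, hσd⟩ := pn_ball n ε hε
  set N := M ×ˢ Metric.ball (0 : Euc n) ε with hN
  set U := pnF μ '' N with hU
  let Θ : Euc (n + k) → Euc (n + k) × Euc n := invFunOn (pnF μ) N
  have hΘN : ∀ u ∈ U, Θ u ∈ N := fun u hu => invFunOn_mem hu
  have hΘF : ∀ u ∈ U, pnF μ (Θ u) = u := fun u hu => invFunOn_eq hu
  have hFΘ : ∀ p ∈ N, Θ (pnF μ p) = p := fun p hp =>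
    hinj (hΘN _ ⟨p, hp, rfl⟩) hp (hΘF _ ⟨p, hp, rfl⟩)
  have hlocU : ∀ u ∈ U, ∃ Ψ : Euc (n + k) → Euc (n + k) × Euc n,
      ContDiffAt ℝ (⊤ : ℕ∞) Ψ u ∧ ∀ᶠ u' in nhds u, Ψ u' ∈ N ∧ pnF μ (Ψ u') = u' := by
    rintro _ ⟨p, hp, rfl⟩
    obtain ⟨O, V, Ψ, hpO, hV, hΨ, h1, h2⟩ := hlc p hp
    obtain ⟨hFV, hΨF⟩ := h1 p hpO hp.1
    have hca := hΨ.contDiffAt (hV.mem_nhds hFV)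
    refine ⟨Ψ, hca, ?_⟩
    have hb : ∀ᶠ u' in nhds (pnF μ p), (Ψ u').2 ∈ Metric.ball (0 : Euc n) ε := by
      apply (continuous_snd.continuousAt.comp hca.continuousAt).eventually_mem
      apply Metric.isOpen_ball.mem_nhds
      simp only [Function.comp_apply]
      rw [hΨF]; exact hp.2
    filter_upwards [hb, hV.mem_nhds hFV] with u' hu' hu'V
    exact ⟨⟨(h2 u' hu'V).2.1, hu'⟩, (h2 u' hu'V).2.2⟩
  have hUo : IsOpen U := by
    rw [isOpen_iff_mem_nhds]
    intro u hu
    obtain ⟨Ψ, -, h⟩ := hlocU u hu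
    filter_upwards [h] with u' hu'
    exact ⟨_, hu'.1, hu'.2⟩
  have hΘs : ContDiffOn ℝ (⊤ : ℕ∞) Θ U := by
    intro u hu
    obtain ⟨Ψ, hΨ, h⟩ := hlocU u hu
    refine (hΨ.congr_of_eventuallyEq ?_).contDiffWithinAt
    filter_upwards [h] with u' hu'
    conv_lhs => rw [← hu'.2]
    exact hFΘ _ hu'.1
  let Φ : Euc (n + k) × Euc n → Euc (n + k) := fun p => pnF μ (p.1, σ p.2)
  let Ξ : Euc (n + k) → Euc (n + k) × Euc n := fun u => ((Θ u).1, τ (Θ u).2)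
  have hm : ∀ p ∈ M ×ˢ (univ : Set (Euc n)), (p.1, σ p.2) ∈ N := fun p hp => ⟨hp.1, hσb _⟩
  have hΞΦ : ∀ p ∈ M ×ˢ (univ : Set (Euc n)), Ξ (Φ p) = p := by
    intro p hp
    simp only [Ξ, Φ]
    rw [hFΘ _ (hm p hp)]
    simp only [hτσ]
  have hΦΞ : ∀ u ∈ U, Ξ u ∈ M ×ˢ (univ : Set (Euc n)) ∧ Φ (Ξ u) = u := by
    intro u hu
    refine ⟨⟨(hΘN u hu).1, mem_univ _⟩, ?_⟩
    simp only [Ξ, Φ]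
    rw [hστ _ (hΘN u hu).2]
    exact hΘF u hu
  refine ⟨U, Φ, Ξ, univ, hUo, ?_, isOpen_univ, subset_univ _, ?_, ?_, ?_, hΞΦ, hΦΞ, ?_, ?_⟩
  · intro x hx
    exact ⟨(x, 0), ⟨hx, Metric.mem_ball_self hε⟩, pnF_zero μ x⟩
  · exact (hF.comp (contDiff_fst.prodMk (hσ.comp contDiff_snd))).contDiffOn
  · exact BijOn.mk (fun p hp => ⟨_, hm p hp, rfl⟩)
      (fun p hp q hq hpq => by rw [← hΞΦ p hp, ← hΞΦ q hq, hpq])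
      (fun u hu => ⟨Ξ u, (hΦΞ u hu).1, (hΦΞ u hu).2⟩)
  · exact (contDiff_fst.comp_contDiffOn hΘs).prodMk
      (hτ.comp (contDiff_snd.comp_contDiffOn hΘs) fun u hu => (hΘN u hu).2)
  · intro x hx
    simp only [Φ, hσ0, pnF_zero]
  · intro x hx i
    obtain ⟨L, hL, hLv⟩ := pnF_deriv μ hμs x
    have h1 : HasFDerivAt (fun p : Euc (n + k) × Euc n => (p.1, σ p.2))
        ((ContinuousLinearMap.fst ℝ (Euc (n + k)) (Euc n)).prod
          ((ContinuousLinearMap.id ℝ (Euc n)).comp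
            (ContinuousLinearMap.snd ℝ (Euc (n + k)) (Euc n)))) (x, 0) := by
      refine hasFDerivAt_fst.prodMk ?_
      exact HasFDerivAt.comp (x, (0 : Euc n)) (g := σ)
        (f := fun p : Euc (n + k) × Euc n => p.2) hσd hasFDerivAt_snd
    have h2 : HasFDerivAt Φ _ (x, 0) :=
      HasFDerivAt.comp (x, (0 : Euc n)) (g := pnF μ)
        (f := fun p : Euc (n + k) × Euc n => (p.1, σ p.2)) (by simpa [hσ0] using hL) h1
    rw [h2.fderiv]
    have h3 : L (0, EuclideanSpace.single i (1 : ℝ)) = ν i x := by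
      rw [hLv, Finset.sum_eq_single i]
      · simp [hμ i x hx]
      · intro b _ hb
        simp [hb]
      · simp
    exact h3
end
end
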